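/- Fix q ≥ 1 and σ > 0. Let (p_n) and (s_n) be sequences of positive integers with s_n ≤ p_n/4, s_n ≥ 8q log log p_n for all n and s_n/p_n → 0, and let (a_n) be positive reals with a_n ≥ a_{q,n}(1) := √(2σ² log(p_n/s_n − 1) + qσ² log log(p_n/s_n − 1)) + √(qσ² log log(p_n/s_n − 1)) for all n. Then the minimax risk satisfies: lim_n [ inf over measurable estimators β̂ : ℝ^{p_n} → ℝ^{p_n} of sup_{β ∈ Ω^{p_n}_{s_n,a_n}} E_β‖β̂(Y) − β‖_q^q ] / (s_n σ_q^q) = 1. -/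

import Mathlib

/-!
The minimax risk is at least `s σ_q^q` exactly (`minimax_ge`) and at most `s (σ_q^q + o(1))`
(`minimax_le` with `tendsto_excess`), so the normalised risk is squeezed to `1`.

*Lower bound.* Take the prior under which `s` fixed coordinates are independent and uniform on
`[a, a + M]` and the others vanish. Integrating one coordinate of the parameter and of the noise
first, the problem becomes the one-dimensional Gaussian location model (`bayes_coord`). There, up to
edge effects of relative size `2K / M`, the Bayes risk is an average of `E|c + η|^q` over shifts `c`,
with `η` truncated to `[-K, K]`; symmetry of `η` and convexity of `|·|^q` show that `c = 0` is the
best shift (`bayes_one_dim`). Letting `K` and `M / K` tend to infinity gives the value `σ_q^q` for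
each of the `s` coordinates.

*Upper bound.* Put `r = p/s - 1`, which tends to infinity, and use hard thresholding at
`τ = √(2σ² log r + qσ² log log r)`. A nonzero coordinate satisfies `|β_j| ≥ τ + u` with
`u = √(qσ² log log r)`. It contributes at most `σ_q^q`, plus the cost of missing it, which is at most
`2^q (τ^q P(|η| ≥ u) + E[|η|^q; |η| ≥ u])`. A zero coordinate contributes `E[|η|^q; |η| ≥ τ]`. The
estimate `E[|η|^q; |η| ≥ x] = o(x^q exp(-x² / (2σ²)))` (`exists_tailMoment_bound`), used for the
exponents `q` and `0`, makes the sum of these extra costs `o(s)`.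
-/

open MeasureTheory ProbabilityTheory Filter
open scoped ENNReal NNReal BigOperators Classical

noncomputable section

/-- The Gaussian distribution `N(m, σ²)` on `ℝ`. -/
def gauss (m σ : ℝ) : Measure ℝ := gaussianReal m ⟨σ ^ 2, sq_nonneg σ⟩

/-- The standard Gaussian distribution on `ℝ`. -/
def stdG : Measure ℝ := gaussianReal 0 1

/-- The Gaussian sequence model: `Y` has independent coordinates `Y j ~ N(β j, σ²)`. -/
def seqModel (p : ℕ) (σ : ℝ) (β : Fin p → ℝ) : Measure (Fin p → ℝ) :=
  Measure.pi fun j => gauss (β j) σ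

/-- `Ω^p_{s,a}`: `s`-sparse vectors with nonzero coordinates at least `a` in absolute value. -/
def sparseSet (p s : ℕ) (a : ℝ) : Set (Fin p → ℝ) :=
  {β | (Finset.univ.filter fun i => β i ≠ 0).card ≤ s ∧ ∀ i, β i ≠ 0 → a ≤ |β i|}

/-- The risk `E_β ‖est(Y) − β‖_q^q` in the Gaussian sequence model. -/
def seqRisk (p : ℕ) (σ q : ℝ) (est : (Fin p → ℝ) → Fin p → ℝ) (β : Fin p → ℝ) : ℝ≥0∞ :=
  ∫⁻ y, ENNReal.ofReal (∑ j, |est y j - β j| ^ q) ∂(seqModel p σ β)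

/-- The maximal risk over `Ω^p_{s,a}`. -/
def maxRisk (p s : ℕ) (σ q a : ℝ) (est : (Fin p → ℝ) → Fin p → ℝ) : ℝ≥0∞ :=
  ⨆ β ∈ sparseSet p s a, seqRisk p σ q est β

/-- The minimax risk over `Ω^p_{s,a}` in the Gaussian sequence model. -/
def minimax (p s : ℕ) (σ q a : ℝ) : ℝ≥0∞ :=
  ⨅ (est : (Fin p → ℝ) → Fin p → ℝ) (_ : Measurable est), maxRisk p s σ q a est

/-- `σ_q^q = E|η|^q` where `η ~ N(0, σ²)`. -/
def sigmaqq (σ q : ℝ) : ℝ := ∫ x, |x| ^ q ∂(gauss 0 σ)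

/-- `P(σ ε > t)` for a standard Gaussian `ε`. -/
def PgtS (σ t : ℝ) : ℝ := (stdG {x | t < σ * x}).toReal

/-- `P(σ ε ≥ t)` for a standard Gaussian `ε`. -/
def PgeS (σ t : ℝ) : ℝ := (stdG {x | t ≤ σ * x}).toReal

/-- The threshold `t(a) = a/2 + σ² log(p/s − 1)/a`. -/
def tFun (p s : ℕ) (σ a : ℝ) : ℝ := a / 2 + σ ^ 2 * Real.log ((p : ℝ) / s - 1) / a

/-- `t* = σ √(2 log(p/s − 1))`. -/
def tStar (p s : ℕ) (σ : ℝ) : ℝ := σ * Real.sqrt (2 * Real.log ((p : ℝ) / s - 1))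

/-- `ψ(p,s,a,σ) = (p−s) P(σε > t(a)) + s P(σε > a − t(a))`. -/
def psi (p s : ℕ) (σ a : ℝ) : ℝ :=
  ((p : ℝ) - s) * PgtS σ (tFun p s σ a) + s * PgtS σ (a - tFun p s σ a)

/-- `ψ₊(p,s,a,σ) = (p−s) P(σε > t(a)) + s P(σε > (a − t(a))₊)`. -/
def psiPlus (p s : ℕ) (σ a : ℝ) : ℝ :=
  ((p : ℝ) - s) * PgtS σ (tFun p s σ a) + s * PgtS σ (max (a - tFun p s σ a) 0)

/-- The hard-thresholding estimator at level `τ`. -/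
def hardThr (p : ℕ) (τ : ℝ) : (Fin p → ℝ) → Fin p → ℝ :=
  fun y j => if τ ≤ |y j| then y j else 0

/-- `a_q(1)` from the paper (at stage `p`, `s`). -/
def aOne (p s : ℕ) (σ q : ℝ) : ℝ :=
  Real.sqrt (2 * σ ^ 2 * Real.log ((p : ℝ) / s - 1)
      + q * σ ^ 2 * Real.log (Real.log ((p : ℝ) / s - 1)))
    + Real.sqrt (q * σ ^ 2 * Real.log (Real.log ((p : ℝ) / s - 1)))

/-- The loss `|x|^q` of one coordinate, valued in `[0, ∞]`. -/
def loss (q x : ℝ) : ℝ≥0∞ := ENNReal.ofReal (|x| ^ q)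

/-- The tail moment `E[|η|^q; |η| ≥ x]` of `η ~ N(0, σ²)`. For `q = 0` it is the two-sided tail
probability, since `0 ^ 0 = 1` for real powers. -/
def tailMoment (σ q x : ℝ) : ℝ≥0∞ := ∫⁻ y in {y | x ≤ |y|}, loss q y ∂(gauss 0 σ)

lemma gauss_eq (m σ : ℝ) : gauss m σ = gaussianReal m (Real.toNNReal (σ ^ 2)) := by
  have h : (⟨σ ^ 2, sq_nonneg σ⟩ : ℝ≥0) = Real.toNNReal (σ ^ 2) := by
    rw [Real.toNNReal_of_nonneg (sq_nonneg σ)]; rfl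
  rw [← h]; rfl

instance instGaussProb (m σ : ℝ) : IsProbabilityMeasure (gauss m σ) := by
  rw [gauss_eq]; infer_instance

lemma measurable_loss (q : ℝ) : Measurable (loss q) := by
  unfold loss; fun_prop

lemma gauss_map_add (m σ : ℝ) : (gauss 0 σ).map (m + ·) = gauss m σ := by
  simp [gauss_eq, gaussianReal_map_const_add]

lemma gauss_map_neg (σ : ℝ) : (gauss 0 σ).map (fun x => -x) = gauss 0 σ := by
  simp [gauss_eq, gaussianReal_map_neg]

lemma gauss_measurePreserving_neg (σ : ℝ) :
    MeasurePreserving (fun x : ℝ => -x) (gauss 0 σ) (gauss 0 σ) :=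
  ⟨measurable_neg, gauss_map_neg σ⟩

lemma integrable_abs_rpow {q : ℝ} (hq : 1 ≤ q) (σ : ℝ) :
    Integrable (fun x : ℝ => |x| ^ q) (gauss 0 σ) := by
  have h := memLp_id_gaussianReal (μ := 0) (v := Real.toNNReal (σ ^ 2)) (Real.toNNReal q)
  have h2 := h.integrable_norm_rpow (by simp; linarith) (by simp)
  simpa [gauss_eq, max_eq_left (by linarith : (0 : ℝ) ≤ q)] using h2

lemma lintegral_loss {q : ℝ} (hq : 1 ≤ q) (σ : ℝ) :
    ∫⁻ x, loss q x ∂(gauss 0 σ) = ENNReal.ofReal (sigmaqq σ q) := by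
  rw [sigmaqq, ofReal_integral_eq_lintegral_ofReal (integrable_abs_rpow hq σ)]
  · rfl
  · exact Eventually.of_forall fun x => by positivity

lemma sigmaqq_pos {q σ : ℝ} (hq : 1 ≤ q) (hσ : 0 < σ) : 0 < sigmaqq σ q := by
  rw [sigmaqq, integral_pos_iff_support_of_nonneg (fun x => by positivity)
    (integrable_abs_rpow hq σ)]
  have hv : Real.toNNReal (σ ^ 2) ≠ 0 := by
    simpa using hσ.ne'
  have : NullSingletonClass (gauss 0 σ) := by
    rw [gauss_eq]; exact nullSingletonClass_gaussianReal hv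
  have hs : Function.support (fun x : ℝ => |x| ^ q) = {0}ᶜ := by
    ext x
    simp [(by linarith : q ≠ 0)]
  rw [hs, prob_compl_eq_one_iff (measurableSet_singleton 0) |>.2 (measure_singleton 0)]
  exact one_pos

/-! ### Lower bound: uniform priors on long intervals -/

/-- Midpoint convexity of `|·|^q` at the points `u + c` and `u - c`. -/
lemma loss_add_loss {q : ℝ} (hq : 1 ≤ q) (c u : ℝ) :
    2 * loss q u ≤ loss q (c + u) + loss q (c + -u) := by
  unfold loss
  rw [← ENNReal.ofReal_add (by positivity) (by positivity)]
  have h2 : (2 : ℝ≥0∞) = ENNReal.ofReal 2 := by simp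
  rw [h2, ← ENNReal.ofReal_mul (by norm_num)]
  apply ENNReal.ofReal_le_ofReal
  have hc := (convexOn_rpow hq).2 (Set.mem_Ici.2 (abs_nonneg (c + u)))
    (Set.mem_Ici.2 (abs_nonneg (c + -u))) (by norm_num : (0 : ℝ) ≤ 1 / 2)
    (by norm_num : (0 : ℝ) ≤ 1 / 2) (by norm_num)
  simp only [smul_eq_mul] at hc
  have hu : |u| ≤ 1 / 2 * |c + u| + 1 / 2 * |c + -u| := by
    have := abs_sub (c + u) (c + -u)
    rw [show c + u - (c + -u) = 2 * u by ring, abs_mul, abs_two] at this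
    linarith
  have := Real.rpow_le_rpow (abs_nonneg u) hu (by linarith : 0 ≤ q)
  linarith

/-- Among all shifts `c`, the truncated risk `∫_{|u| ≤ K} |c + u|^q` under a centred Gaussian is
smallest at `c = 0`, by symmetry and convexity. -/
lemma lintegral_loss_shift {q : ℝ} (hq : 1 ≤ q) (σ K c : ℝ) :
    ∫⁻ u in Set.Icc (-K) K, loss q u ∂(gauss 0 σ)
      ≤ ∫⁻ u in Set.Icc (-K) K, loss q (c + u) ∂(gauss 0 σ) := by
  have hm := measurable_loss q
  have hneg : ∫⁻ u in Set.Icc (-K) K, loss q (c + -u) ∂(gauss 0 σ)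
      = ∫⁻ u in Set.Icc (-K) K, loss q (c + u) ∂(gauss 0 σ) := by
    have h := (gauss_measurePreserving_neg σ).setLIntegral_comp_preimage
      (s := Set.Icc (-K) K) measurableSet_Icc (f := fun u => loss q (c + u)) (by fun_prop)
    rw [show (fun x : ℝ => -x) ⁻¹' Set.Icc (-K) K = Set.Icc (-K) K by
      ext x; simp only [Set.mem_preimage, Set.mem_Icc]; constructor <;> rintro ⟨h1, h2⟩ <;>
        constructor <;> linarith] at h
    exact h
  have h2 : 2 * ∫⁻ u in Set.Icc (-K) K, loss q u ∂(gauss 0 σ)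
      ≤ 2 * ∫⁻ u in Set.Icc (-K) K, loss q (c + u) ∂(gauss 0 σ) := by
    rw [← lintegral_const_mul _ hm]
    calc _ ≤ ∫⁻ u in Set.Icc (-K) K, (loss q (c + u) + loss q (c + -u)) ∂(gauss 0 σ) :=
          lintegral_mono fun u => loss_add_loss hq c u
      _ = _ := by rw [lintegral_add_left (by fun_prop), hneg, two_mul]
  exact (ENNReal.mul_le_mul_iff_right (by norm_num) (by norm_num)).1 h2

/-- Unnormalised Bayes risk of an estimator `g` in the one-dimensional location model with uniform
prior on `[a, a + M]`. After swapping the integrals, translation invariance of Lebesgue measure turns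
`g (t + u) - t` into `(g y - y) + u`, and restricting to `|u| ≤ K` and `y ∈ [a + K, a + M - K]`
reduces the bound to `lintegral_loss_shift`. -/
lemma bayes_one_dim {q : ℝ} (hq : 1 ≤ q) (σ a K M : ℝ) {g : ℝ → ℝ}
    (hg : Measurable g) :
    ENNReal.ofReal (M - 2 * K) * ∫⁻ u in Set.Icc (-K) K, loss q u ∂(gauss 0 σ)
      ≤ ∫⁻ t in Set.Icc a (a + M), ∫⁻ u, loss q (g (t + u) - t) ∂(gauss 0 σ) := by
  have hm := measurable_loss q
  rw [lintegral_lintegral_swap (by fun_prop)]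
  -- For `|u| ≤ K`, the interval `[a + K, a + M - K]` is contained in `[a + u, a + M + u]`.
  have hshift : ∀ u ∈ Set.Icc (-K) K,
      ∫⁻ y in Set.Icc (a + K) (a + M - K), loss q (g y - y + u)
        ≤ ∫⁻ t in Set.Icc a (a + M), loss q (g (t + u) - t) := by
    intro u hu
    have h := (measurePreserving_add_right volume u).setLIntegral_comp_preimage
      (s := Set.Icc (a + K) (a + M - K)) measurableSet_Icc
      (f := fun y => loss q (g y - y + u)) (by fun_prop)
    rw [← h]
    refine (lintegral_mono_set (t := Set.Icc a (a + M)) ?_).trans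
      (le_of_eq (lintegral_congr fun t => by congr 1; ring))
    intro t ht
    simp only [Set.mem_preimage, Set.mem_Icc] at ht hu ⊢
    constructor <;> linarith
  calc ENNReal.ofReal (M - 2 * K) * ∫⁻ u in Set.Icc (-K) K, loss q u ∂(gauss 0 σ)
      = ∫⁻ y in Set.Icc (a + K) (a + M - K),
          ∫⁻ u in Set.Icc (-K) K, loss q u ∂(gauss 0 σ) := by
        rw [setLIntegral_const, Real.volume_Icc, mul_comm]; congr 2; ring
    _ ≤ ∫⁻ y in Set.Icc (a + K) (a + M - K),
          ∫⁻ u in Set.Icc (-K) K, loss q (g y - y + u) ∂(gauss 0 σ) :=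
        lintegral_mono fun y => lintegral_loss_shift hq σ K _
    _ = ∫⁻ u in Set.Icc (-K) K, (∫⁻ y in Set.Icc (a + K) (a + M - K),
          loss q (g y - y + u)) ∂(gauss 0 σ) := lintegral_lintegral_swap (by fun_prop)
    _ ≤ ∫⁻ u in Set.Icc (-K) K, (∫⁻ t in Set.Icc a (a + M), loss q (g (t + u) - t))
          ∂(gauss 0 σ) :=
        setLIntegral_mono' measurableSet_Icc hshift
    _ ≤ _ := setLIntegral_le_lintegral _ _

/-- Coordinate `j` of a product of probability measures may be integrated out first. -/
lemma lintegral_pi_update {p : ℕ} (μ : Fin p → Measure ℝ) [∀ i, IsProbabilityMeasure (μ i)]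
    {f : (Fin p → ℝ) → ℝ≥0∞} (hf : Measurable f) (j : Fin p) :
    ∫⁻ x, f x ∂(Measure.pi μ)
      = ∫⁻ x, ∫⁻ t, f (Function.update x j t) ∂(μ j) ∂(Measure.pi μ) := by
  have hu : Measurable fun z : (Fin p → ℝ) × ℝ => f (Function.update z.1 j z.2) :=
    hf.comp measurable_update'
  refine lintegral_eq_of_lmarginal_eq {j} hf hu.lintegral_prod_right' ?_
  ext x
  simp [lmarginal_singleton]

lemma seqModel_eq_map (p : ℕ) (σ : ℝ) (β : Fin p → ℝ) :
    seqModel p σ β = (Measure.pi fun _ : Fin p => gauss 0 σ).map (β + ·) := by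
  have h := Measure.pi_map_pi (μ := fun _ : Fin p => gauss 0 σ)
    (f := fun j x => β j + x) (fun j => by fun_prop)
  simp only [gauss_map_add] at h
  rw [seqModel, ← h]; rfl

lemma seqRisk_eq_sum {p : ℕ} (σ q : ℝ) {est : (Fin p → ℝ) → Fin p → ℝ} (he : Measurable est)
    (β : Fin p → ℝ) :
    seqRisk p σ q est β = ∑ j, ∫⁻ y, loss q (est y j - β j) ∂(seqModel p σ β) := by
  have hm := measurable_loss q
  rw [seqRisk, ← lintegral_finsetSum]
  · refine lintegral_congr fun y => ?_
    rw [ENNReal.ofReal_sum_of_nonneg fun j _ => by positivity]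
    rfl
  · intro j _
    fun_prop

/-- One coordinate of the Bayes risk under a product prior: conditionally on the other coordinates
of the parameter and of the noise, `est` is an estimator in the one-dimensional location model,
so `bayes_one_dim` applies. -/
lemma bayes_coord {p : ℕ} {q : ℝ} (hq : 1 ≤ q) (σ a K M : ℝ)
    {est : (Fin p → ℝ) → Fin p → ℝ} (he : Measurable est) (c : ℝ≥0∞)
    (μ : Fin p → Measure ℝ) [∀ i, IsProbabilityMeasure (μ i)] (j : Fin p)
    (hj : μ j = c • volume.restrict (Set.Icc a (a + M))) :
    c * (ENNReal.ofReal (M - 2 * K) * ∫⁻ u in Set.Icc (-K) K, loss q u ∂(gauss 0 σ))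
      ≤ ∫⁻ β, ∫⁻ y, loss q (est y j - β j) ∂(seqModel p σ β) ∂(Measure.pi μ) := by
  have hm := measurable_loss q
  set G : Measure (Fin p → ℝ) := Measure.pi fun _ : Fin p => gauss 0 σ with hG
  have hej : Measurable fun y => est y j := by fun_prop
  have h1 : ∀ β, ∫⁻ y, loss q (est y j - β j) ∂(seqModel p σ β)
      = ∫⁻ z, ∫⁻ u, loss q (est (β + Function.update z j u) j - β j) ∂(gauss 0 σ) ∂G := by
    intro β
    rw [seqModel_eq_map, lintegral_map (by fun_prop) (by fun_prop)]
    exact lintegral_pi_update (fun _ => gauss 0 σ) (f := fun z => loss q (est (β + z) j - β j))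
      (by fun_prop) j
  simp_rw [h1]
  have hmeas : Measurable fun w : ((Fin p → ℝ) × (Fin p → ℝ)) × ℝ =>
      loss q (est (w.1.1 + Function.update w.1.2 j w.2) j - w.1.1 j) := by
    have : Measurable fun w : ((Fin p → ℝ) × (Fin p → ℝ)) × ℝ => Function.update w.1.2 j w.2 :=
      measurable_update'.comp (by fun_prop : Measurable fun w : ((Fin p → ℝ) × (Fin p → ℝ)) × ℝ =>
        (w.1.2, w.2))
    fun_prop
  have hF : Measurable fun w : (Fin p → ℝ) × (Fin p → ℝ) =>
      ∫⁻ u, loss q (est (w.1 + Function.update w.2 j u) j - w.1 j) ∂(gauss 0 σ) :=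
    hmeas.lintegral_prod_right'
  rw [lintegral_lintegral_swap hF.aemeasurable]
  have key : ∀ z : Fin p → ℝ,
      c * (ENNReal.ofReal (M - 2 * K) * ∫⁻ u in Set.Icc (-K) K, loss q u ∂(gauss 0 σ))
      ≤ ∫⁻ β, ∫⁻ u, loss q (est (β + Function.update z j u) j - β j) ∂(gauss 0 σ)
          ∂(Measure.pi μ) := by
    intro z
    have hFz : Measurable fun β : Fin p → ℝ =>
        ∫⁻ u, loss q (est (β + Function.update z j u) j - β j) ∂(gauss 0 σ) := by
      have := hF.comp (measurable_prodMk_right (y := z))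
      simpa only [Function.comp_def] using this
    rw [lintegral_pi_update μ hFz j]
    have key2 : ∀ β : Fin p → ℝ,
        c * (ENNReal.ofReal (M - 2 * K) * ∫⁻ u in Set.Icc (-K) K, loss q u ∂(gauss 0 σ))
        ≤ ∫⁻ t, ∫⁻ u, loss q (est (Function.update β j t + Function.update z j u) j
            - Function.update β j t j) ∂(gauss 0 σ) ∂(μ j) := by
      intro β
      have hb := bayes_one_dim hq σ a K M
        (g := fun y => est (Function.update (β + z) j y) j)
        (hej.comp (measurable_update (β + z)))
      rw [hj, lintegral_smul_measure, smul_eq_mul]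
      refine mul_le_mul_right (hb.trans (le_of_eq ?_)) c
      simp only [Function.update_self, ← Function.update_add]
    calc _ = ∫⁻ _, c * (ENNReal.ofReal (M - 2 * K) *
              ∫⁻ u in Set.Icc (-K) K, loss q u ∂(gauss 0 σ)) ∂(Measure.pi μ) := by simp
      _ ≤ _ := lintegral_mono key2
  calc _ = ∫⁻ _, c * (ENNReal.ofReal (M - 2 * K) *
            ∫⁻ u in Set.Icc (-K) K, loss q u ∂(gauss 0 σ)) ∂G := by simp
    _ ≤ _ := lintegral_mono key

/-- The maximal risk dominates the Bayes risk for the prior under which the first `s` coordinates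
are independent and uniform on `[a, a + M]` and the others vanish. -/
lemma minimax_ge_trunc {p s : ℕ} {q : ℝ} (hq : 1 ≤ q) (σ a K M : ℝ) (hsp : s ≤ p)
    (hM : 0 < M) :
    (s : ℝ≥0∞) * ((ENNReal.ofReal M)⁻¹ *
      (ENNReal.ofReal (M - 2 * K) * ∫⁻ u in Set.Icc (-K) K, loss q u ∂(gauss 0 σ)))
      ≤ minimax p s σ q a := by
  have hm := measurable_loss q
  refine le_iInf₂ fun est he => ?_
  set c : ℝ≥0∞ := (ENNReal.ofReal M)⁻¹ with hc
  let μ : Fin p → Measure ℝ := fun j =>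
    if (j : ℕ) < s then c • volume.restrict (Set.Icc a (a + M)) else Measure.dirac 0
  have hμ : ∀ j, IsProbabilityMeasure (μ j) := by
    intro j
    by_cases h : (j : ℕ) < s
    · simp only [μ, h, if_true]
      constructor
      simp only [Measure.smul_apply, Measure.restrict_apply_univ, Real.volume_Icc, smul_eq_mul, hc]
      rw [add_sub_cancel_left]
      exact ENNReal.inv_mul_cancel (by simpa using hM) ENNReal.ofReal_ne_top
    · simp only [μ, h, if_false]; infer_instance
  have hcard : (Finset.univ.filter fun j : Fin p => (j : ℕ) < s).card = s := by
    have : (Finset.univ.filter fun j : Fin p => (j : ℕ) < s)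
        = Finset.univ.map (Fin.castLEEmb hsp) := by
      ext j
      simp only [Finset.mem_filter, Finset.mem_univ, true_and, Finset.mem_map]
      constructor
      · intro h; exact ⟨⟨j, h⟩, rfl⟩
      · rintro ⟨i, rfl⟩; exact i.2
    rw [this]; simp
  have hsupp : ∀ᵐ β ∂(Measure.pi μ), β ∈ sparseSet p s a := by
    have h1 : ∀ j : Fin p, ∀ᵐ β ∂(Measure.pi μ),
        ((j : ℕ) < s → a ≤ β j) ∧ (¬ (j : ℕ) < s → β j = 0) := by
      intro j
      refine (Measure.quasiMeasurePreserving_eval μ j).ae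
        (p := fun x => ((j : ℕ) < s → a ≤ x) ∧ (¬ (j : ℕ) < s → x = 0)) ?_
      by_cases h : (j : ℕ) < s
      · simp only [μ, h, if_true]
        refine Measure.ae_smul_measure ?_ c
        filter_upwards [ae_restrict_mem measurableSet_Icc] with x hx
        simpa using hx.1
      · simp only [μ, h, if_false]
        rw [ae_dirac_eq]
        simp
    filter_upwards [ae_all_iff.2 h1] with β hβ
    refine ⟨?_, ?_⟩
    · calc _ ≤ (Finset.univ.filter fun j : Fin p => (j : ℕ) < s).card := by
            apply Finset.card_le_card
            intro j hj
            simp only [Finset.mem_filter, Finset.mem_univ, true_and] at hj ⊢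
            by_contra h
            exact hj ((hβ j).2 h)
        _ = s := hcard
    · intro j hj
      by_cases h : (j : ℕ) < s
      · exact ((hβ j).1 h).trans (le_abs_self _)
      · exact absurd ((hβ j).2 h) hj
  have hrisk : ∫⁻ β, seqRisk p σ q est β ∂(Measure.pi μ) ≤ maxRisk p s σ q a est := by
    calc _ ≤ ∫⁻ _, maxRisk p s σ q a est ∂(Measure.pi μ) := by
          apply lintegral_mono_ae
          filter_upwards [hsupp] with β hβ
          exact le_iSup₂ (f := fun β _ => seqRisk p σ q est β) β hβ
      _ = _ := by simp
  refine le_trans ?_ hrisk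
  simp_rw [seqRisk_eq_sum σ q he]
  have hmj : ∀ j, Measurable fun β => ∫⁻ y, loss q (est y j - β j) ∂(seqModel p σ β) := by
    intro j
    have : ∀ β, ∫⁻ y, loss q (est y j - β j) ∂(seqModel p σ β) =
        ∫⁻ z, loss q (est (β + z) j - β j) ∂(Measure.pi fun _ : Fin p => gauss 0 σ) := by
      intro β
      rw [seqModel_eq_map, lintegral_map (by fun_prop) (by fun_prop)]
    simp_rw [this]
    apply Measurable.lintegral_prod_right'
      (f := fun w : (Fin p → ℝ) × (Fin p → ℝ) => loss q (est (w.1 + w.2) j - w.1 j))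
    fun_prop
  rw [lintegral_finsetSum _ fun j _ => hmj j]
  calc _ = ∑ j ∈ Finset.univ.filter fun j : Fin p => (j : ℕ) < s, c *
            (ENNReal.ofReal (M - 2 * K) * ∫⁻ u in Set.Icc (-K) K, loss q u ∂(gauss 0 σ)) := by
          rw [Finset.sum_const, hcard, nsmul_eq_mul]
    _ ≤ ∑ j ∈ Finset.univ.filter fun j : Fin p => (j : ℕ) < s,
          ∫⁻ β, ∫⁻ y, loss q (est y j - β j) ∂(seqModel p σ β) ∂(Measure.pi μ) := by
        refine Finset.sum_le_sum fun j hj => bayes_coord hq σ a K M he c μ j ?_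
        simp only [μ, (Finset.mem_filter.1 hj).2, if_true]
    _ ≤ _ := Finset.sum_le_sum_of_subset (Finset.filter_subset _ _)

/-- The minimax risk is at least `s σ_q^q`, for every sparsity `s ≤ p` and every signal level. -/
theorem minimax_ge {p s : ℕ} {q : ℝ} (hq : 1 ≤ q) (σ a : ℝ) (hsp : s ≤ p) :
    (s : ℝ≥0∞) * ENNReal.ofReal (sigmaqq σ q) ≤ minimax p s σ q a := by
  have hm := measurable_loss q
  rw [← lintegral_loss hq]
  have hT : Tendsto (fun n : ℕ => ∫⁻ u in Set.Icc (-(n : ℝ)) n, loss q u ∂(gauss 0 σ)) atTop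
      (nhds (∫⁻ u, loss q u ∂(gauss 0 σ))) :=
    (aecover_Icc (tendsto_neg_atTop_atBot.comp tendsto_natCast_atTop_atTop)
      tendsto_natCast_atTop_atTop).lintegral_tendsto_of_countably_generated hm.aemeasurable
  -- With `K = n` and `M = n² + 2n`, the factor `(M - 2K) / M` tends to `1`.
  have hR : Tendsto (fun n : ℕ => (ENNReal.ofReal ((n : ℝ) ^ 2 + 2 * n))⁻¹ *
      ENNReal.ofReal (((n : ℝ) ^ 2 + 2 * n) - 2 * n)) atTop (nhds 1) := by
    have h0 : Tendsto (fun n : ℕ => ENNReal.ofReal ((1 + 2 * ((n : ℝ))⁻¹)⁻¹)) atTop (nhds 1) := by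
      have h1 : Tendsto (fun n : ℕ => (1 + 2 * ((n : ℝ))⁻¹)⁻¹) atTop (nhds ((1 + 2 * 0)⁻¹)) :=
        (((tendsto_inv_atTop_nhds_zero_nat (𝕜 := ℝ)).const_mul 2).const_add 1).inv₀ (by norm_num)
      simpa using ENNReal.tendsto_ofReal h1
    refine h0.congr' ?_
    filter_upwards [eventually_gt_atTop 0] with n hn
    have hn' : (0 : ℝ) < n := by exact_mod_cast hn
    rw [← ENNReal.ofReal_inv_of_pos (by positivity), ← ENNReal.ofReal_mul (by positivity)]
    congr 1
    field_simp
    ring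
  have hlim := ENNReal.Tendsto.const_mul (a := (s : ℝ≥0∞))
    (ENNReal.Tendsto.mul hR (Or.inl one_ne_zero) hT (Or.inr ENNReal.one_ne_top))
    (Or.inr (ENNReal.natCast_ne_top s))
  rw [one_mul] at hlim
  refine le_of_tendsto hlim ?_
  filter_upwards [eventually_gt_atTop 0] with n hn
  have hn' : (0 : ℝ) < n := by exact_mod_cast hn
  rw [mul_assoc]
  exact minimax_ge_trunc hq σ a n ((n : ℝ) ^ 2 + 2 * n) hsp (by positivity)

/-! ### Gaussian tail moments -/

lemma add_rpow_le_two_rpow {q x y : ℝ} (hq : 0 ≤ q) (hx : 0 ≤ x) (hy : 0 ≤ y) :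
    (x + y) ^ q ≤ 2 ^ q * (x ^ q + y ^ q) := by
  have h1 : x + y ≤ 2 * max x y := by
    linarith [le_max_left x y, le_max_right x y]
  calc (x + y) ^ q ≤ (2 * max x y) ^ q := Real.rpow_le_rpow (by positivity) h1 hq
    _ = 2 ^ q * (max x y) ^ q := Real.mul_rpow (by norm_num) (le_max_of_le_left hx)
    _ ≤ _ := by
      gcongr
      rcases max_choice x y with h | h <;> rw [h] <;>
        linarith [Real.rpow_nonneg hx q, Real.rpow_nonneg hy q]

/-- The ratio of `|y|^q exp(-y² / (2σ²))` at `y = x + w` to its value at `y = x`. -/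
def tailKernel (σ q x w : ℝ) : ℝ :=
  (1 + w / x) ^ q * Real.exp (-(x * w / σ ^ 2)) * Real.exp (-(w ^ 2 / (2 * σ ^ 2)))

lemma tendsto_lintegral_tailKernel {σ q : ℝ} (hσ : 0 < σ) (hq : 0 ≤ q) :
    Tendsto (fun x => ∫⁻ w in Set.Ioi (0 : ℝ), ENNReal.ofReal (tailKernel σ q x w)) atTop
      (nhds 0) := by
  have hle : ∀ x w : ℝ, 1 ≤ x → 0 < w → (1 + w / x) ^ q ≤ (1 + w) ^ q := by
    intro x w hx hw
    have : w / x ≤ w := div_le_self hw.le hx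
    gcongr
  have h := tendsto_lintegral_filter_of_dominated_convergence (l := atTop)
    (μ := volume.restrict (Set.Ioi (0 : ℝ)))
    (F := fun x w => ENNReal.ofReal (tailKernel σ q x w)) (f := fun _ => 0)
    (fun w => ENNReal.ofReal (2 ^ q * ((1 + w ^ q) * Real.exp (-(w ^ 2 / (2 * σ ^ 2))))))
    (Eventually.of_forall fun x => by unfold tailKernel; fun_prop) ?_ ?_ ?_
  · simpa using h
  · filter_upwards [eventually_ge_atTop 1] with x hx
    filter_upwards [ae_restrict_mem measurableSet_Ioi] with w hw
    have hw : 0 < w := hw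
    apply ENNReal.ofReal_le_ofReal
    have h1 : (1 + w / x) ^ q ≤ 2 ^ q * (1 + w ^ q) := by
      have := add_rpow_le_two_rpow hq zero_le_one hw.le
      rw [Real.one_rpow] at this
      exact (hle x w hx hw).trans this
    have h2 : Real.exp (-(x * w / σ ^ 2)) ≤ 1 := by
      rw [Real.exp_le_one_iff]
      have : 0 ≤ x * w / σ ^ 2 := by positivity
      linarith
    have h3 : 0 ≤ (1 + w / x) ^ q := by positivity
    unfold tailKernel
    rw [← mul_assoc]
    refine mul_le_mul_of_nonneg_right ?_ (Real.exp_nonneg _)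
    exact (mul_le_of_le_one_right h3 h2).trans h1
  · have hb : 0 < (2 * σ ^ 2)⁻¹ := by positivity
    have hi : Integrable fun w : ℝ => 2 ^ q * ((1 + w ^ q) * Real.exp (-(w ^ 2 / (2 * σ ^ 2)))) := by
      have h := ((integrable_exp_neg_mul_sq hb).add
        (integrable_rpow_mul_exp_neg_mul_sq hb (s := q) (by linarith))).const_mul (2 ^ q)
      refine h.congr (Eventually.of_forall fun w => ?_)
      simp only [Pi.add_apply]
      rw [show -(w ^ 2 / (2 * σ ^ 2)) = -(2 * σ ^ 2)⁻¹ * w ^ 2 by field_simp]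
      ring
    exact hi.restrict.lintegral_lt_top.ne
  · filter_upwards [ae_restrict_mem measurableSet_Ioi] with w hw
    have hw : 0 < w := hw
    have hlim : Tendsto (fun x : ℝ => ENNReal.ofReal ((1 + w) ^ q *
        Real.exp (-(x * (w / σ ^ 2))))) atTop (nhds 0) := by
      have h1 : Tendsto (fun x : ℝ => Real.exp (-(x * (w / σ ^ 2)))) atTop (nhds 0) :=
        Real.tendsto_exp_neg_atTop_nhds_zero.comp
          (tendsto_id.atTop_mul_const (by positivity : 0 < w / σ ^ 2))
      simpa using ENNReal.tendsto_ofReal (h1.const_mul ((1 + w) ^ q))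
    refine tendsto_of_tendsto_of_tendsto_of_le_of_le' tendsto_const_nhds hlim
      (Eventually.of_forall fun _ => zero_le) ?_
    filter_upwards [eventually_ge_atTop 1] with x hx
    apply ENNReal.ofReal_le_ofReal
    unfold tailKernel
    have h4 : Real.exp (-(w ^ 2 / (2 * σ ^ 2))) ≤ 1 := by
      rw [Real.exp_le_one_iff]
      have : 0 ≤ w ^ 2 / (2 * σ ^ 2) := by positivity
      linarith
    have h5 := hle x w hx hw
    have h3 : 0 ≤ (1 + w / x) ^ q := by positivity
    rw [← mul_div_assoc]
    calc _ ≤ (1 + w / x) ^ q * Real.exp (-(x * w / σ ^ 2)) * 1 := by gcongr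
      _ ≤ _ := by rw [mul_one]; gcongr

lemma lintegral_Ici_gauss {σ : ℝ} (hσ : 0 < σ) (q : ℝ) {x : ℝ} (hx : 0 < x) :
    ∫⁻ y in Set.Ici x, loss q y ∂(gauss 0 σ)
      = ENNReal.ofReal (x ^ q * Real.exp (-(x ^ 2 / (2 * σ ^ 2)))) *
        (ENNReal.ofReal ((√(2 * Real.pi * σ ^ 2))⁻¹) *
          ∫⁻ w in Set.Ioi (0 : ℝ), ENNReal.ofReal (tailKernel σ q x w)) := by
  have hm := measurable_loss q
  have hv : Real.toNNReal (σ ^ 2) ≠ 0 := by simpa using hσ.ne'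
  rw [gauss_eq, gaussianReal_of_var_ne_zero _ hv,
    restrict_withDensity measurableSet_Ici,
    lintegral_withDensity_eq_lintegral_mul _ (measurable_gaussianPDF _ _) hm]
  have hmeas : Measurable (gaussianPDF 0 (σ ^ 2).toNNReal * loss q) :=
    (measurable_gaussianPDF _ _).mul hm
  have h := (measurePreserving_add_right volume x).setLIntegral_comp_preimage
    (s := Set.Ici x) measurableSet_Ici hmeas
  rw [← h, show (fun w : ℝ => w + x) ⁻¹' Set.Ici x = Set.Ici 0 by ext w; simp,
    ← setLIntegral_congr Ioi_ae_eq_Ici]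
  have hk : Measurable (tailKernel σ q x) := by unfold tailKernel; fun_prop
  rw [← mul_assoc, ← lintegral_const_mul _ (by fun_prop)]
  refine setLIntegral_congr_fun measurableSet_Ioi fun w hw => ?_
  have hw : 0 < w := hw
  simp only [Pi.mul_apply, gaussianPDF, gaussianPDFReal, loss]
  rw [← ENNReal.ofReal_mul (by positivity), ← ENNReal.ofReal_mul (by positivity),
    ← ENNReal.ofReal_mul (by positivity)]
  congr 1
  rw [Real.coe_toNNReal _ (sq_nonneg σ), abs_of_pos (by positivity), tailKernel,
    show w + x = x * (1 + w / x) by field_simp; ring, Real.mul_rpow hx.le (by positivity),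
    show -(x * (1 + w / x) - 0) ^ 2 / (2 * σ ^ 2)
      = -(x ^ 2 / (2 * σ ^ 2)) + (-(x * w / σ ^ 2) + -(w ^ 2 / (2 * σ ^ 2))) by
        field_simp; ring, Real.exp_add, Real.exp_add]
  ring

/-- The tail moment `E[|η|^q; |η| ≥ x]` is `o(x^q exp(-x² / (2σ²)))` as `x → ∞`. -/
theorem exists_tailMoment_bound {σ q : ℝ} (hσ : 0 < σ) (hq : 0 ≤ q) :
    ∃ κ : ℝ → ℝ≥0∞, Tendsto κ atTop (nhds 0) ∧ ∀ x, 0 < x →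
      tailMoment σ q x
        ≤ ENNReal.ofReal (x ^ q * Real.exp (-(x ^ 2 / (2 * σ ^ 2)))) * κ x := by
  have hm := measurable_loss q
  refine ⟨fun x => 2 * (ENNReal.ofReal ((√(2 * Real.pi * σ ^ 2))⁻¹) *
    ∫⁻ w in Set.Ioi (0 : ℝ), ENNReal.ofReal (tailKernel σ q x w)), ?_, fun x hx => ?_⟩
  · have h := ENNReal.Tendsto.const_mul (a := 2) (ENNReal.Tendsto.const_mul
      (a := ENNReal.ofReal ((√(2 * Real.pi * σ ^ 2))⁻¹))
      (tendsto_lintegral_tailKernel hσ hq) (Or.inr ENNReal.ofReal_ne_top)) (Or.inr (by simp))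
    simpa using h
  · have hneg : ∫⁻ y in (fun y : ℝ => -y) ⁻¹' Set.Ici x, loss q y ∂(gauss 0 σ)
        = ∫⁻ y in Set.Ici x, loss q y ∂(gauss 0 σ) := by
      rw [← (gauss_measurePreserving_neg σ).setLIntegral_comp_preimage
        (s := Set.Ici x) measurableSet_Ici hm]
      simp [loss]
    calc tailMoment σ q x
        ≤ ∫⁻ y in Set.Ici x ∪ (fun y : ℝ => -y) ⁻¹' Set.Ici x, loss q y ∂(gauss 0 σ) :=
          lintegral_mono_set fun y hy => by
            simpa [le_abs, le_neg] using hy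
      _ ≤ _ := lintegral_union_le _ _ _
      _ = _ := by
        rw [hneg, lintegral_Ici_gauss hσ q hx]; ring

/-! ### The threshold and the excess risk as functions of `r = p/s - 1` -/

/-- The threshold `τ = √(2σ² log r + qσ² log log r)`. -/
def tauR (σ q r : ℝ) : ℝ :=
  √(2 * σ ^ 2 * Real.log r + q * σ ^ 2 * Real.log (Real.log r))

/-- The gap `√(qσ² log log r)` between `a_q(1)` and the threshold `tauR`. -/
def gapR (σ q r : ℝ) : ℝ := √(q * σ ^ 2 * Real.log (Real.log r))

/-- The bound, per nonzero coordinate, on the risk of hard thresholding beyond `σ_q^q`. The first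
term accounts for missed signals, the second for the `p = s (r + 1)` possible false detections. -/
def excess (σ q r : ℝ) : ℝ≥0∞ :=
  ENNReal.ofReal (2 ^ q) *
      (ENNReal.ofReal (tauR σ q r ^ q) * tailMoment σ 0 (gapR σ q r)
        + tailMoment σ q (gapR σ q r))
    + ENNReal.ofReal (r + 1) * tailMoment σ q (tauR σ q r)

lemma tendsto_gapR {σ q : ℝ} (hσ : 0 < σ) (hq : 1 ≤ q) : Tendsto (gapR σ q) atTop atTop := by
  unfold gapR
  exact Real.tendsto_sqrt_atTop.comp
    ((Real.tendsto_log_atTop.comp Real.tendsto_log_atTop).const_mul_atTop (by positivity))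

lemma gapR_le_tauR {σ q r : ℝ} (hr : 1 ≤ r) : gapR σ q r ≤ tauR σ q r := by
  have := Real.log_nonneg hr
  exact Real.sqrt_le_sqrt (le_add_of_nonneg_left (by positivity))

lemma tauR_rpow_le {σ q r : ℝ} (hq : 1 ≤ q) (hr : 1 ≤ Real.log r) :
    tauR σ q r ^ q * Real.log r ^ (-(q / 2)) ≤ ((2 + q) * σ ^ 2) ^ (q / 2) := by
  have hL : 0 < Real.log r := by linarith
  have h1 : 2 * σ ^ 2 * Real.log r + q * σ ^ 2 * Real.log (Real.log r)
      ≤ ((2 + q) * σ ^ 2) * Real.log r := by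
    have : Real.log (Real.log r) ≤ Real.log r := Real.log_le_self hL.le
    have : q * σ ^ 2 * Real.log (Real.log r) ≤ q * σ ^ 2 * Real.log r := by gcongr
    linarith
  have h0 : 0 ≤ 2 * σ ^ 2 * Real.log r + q * σ ^ 2 * Real.log (Real.log r) := by
    have := Real.log_nonneg hr
    positivity
  have h2 : tauR σ q r ^ q
      = (2 * σ ^ 2 * Real.log r + q * σ ^ 2 * Real.log (Real.log r)) ^ (q / 2) := by
    rw [tauR, Real.sqrt_eq_rpow, ← Real.rpow_mul h0]; congr 1; ring
  calc _ ≤ (((2 + q) * σ ^ 2) * Real.log r) ^ (q / 2) * Real.log r ^ (-(q / 2)) := by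
        rw [h2]; gcongr
    _ = _ := by
        rw [Real.mul_rpow (by positivity) hL.le, mul_assoc, ← Real.rpow_add hL]; simp

lemma exp_gapR {σ q r : ℝ} (hσ : 0 < σ) (hq : 1 ≤ q) (hr : 1 ≤ Real.log r) :
    Real.exp (-(gapR σ q r ^ 2 / (2 * σ ^ 2))) = Real.log r ^ (-(q / 2)) := by
  have := Real.log_nonneg hr
  rw [gapR, Real.sq_sqrt (by positivity), Real.rpow_def_of_pos (by linarith)]
  congr 1; field_simp

lemma exp_tauR {σ q r : ℝ} (hσ : 0 < σ) (hq : 1 ≤ q) (hr0 : 0 < r) (hr : 1 ≤ Real.log r) :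
    Real.exp (-(tauR σ q r ^ 2 / (2 * σ ^ 2))) = r⁻¹ * Real.log r ^ (-(q / 2)) := by
  have := Real.log_nonneg hr
  rw [tauR, Real.sq_sqrt (by positivity), Real.rpow_def_of_pos (by linarith)]
  nth_rewrite 3 [← Real.exp_log hr0]
  rw [← Real.exp_neg, ← Real.exp_add]
  congr 1; field_simp; ring

/-- Since `τ^q = O((log r)^(q/2))`, the factors `exp(-τ² / (2σ²)) = r⁻¹ (log r)^(-q/2)` and
`exp(-gap² / (2σ²)) = (log r)^(-q/2)` keep all three terms of `excess` bounded up to the vanishing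
factor from `exists_tailMoment_bound`. -/
theorem tendsto_excess {σ q : ℝ} (hσ : 0 < σ) (hq : 1 ≤ q) :
    Tendsto (excess σ q) atTop (nhds 0) := by
  have hq0 : 0 ≤ q := by linarith
  obtain ⟨κ, hκ, hκb⟩ := exists_tailMoment_bound hσ hq0
  obtain ⟨κ₀, hκ₀, hκ₀b⟩ := exists_tailMoment_bound (q := 0) hσ le_rfl
  set C : ℝ := ((2 + q) * σ ^ 2) ^ (q / 2) with hC
  have hgap := tendsto_gapR hσ hq
  have hlarge : ∀ᶠ r : ℝ in atTop, 1 ≤ r ∧ 1 ≤ Real.log r ∧ 0 < gapR σ q r :=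
    (eventually_ge_atTop 1).and ((Real.tendsto_log_atTop.eventually_ge_atTop 1).and
      (hgap.eventually_gt_atTop 0))
  have htau : Tendsto (tauR σ q) atTop atTop :=
    tendsto_atTop_mono' _ (by filter_upwards [hlarge] with r hr using gapR_le_tauR hr.1) hgap
  have hmain : Tendsto (fun r => ENNReal.ofReal (2 ^ q) *
      (ENNReal.ofReal C * κ₀ (gapR σ q r) + ENNReal.ofReal C * κ (gapR σ q r))
      + ENNReal.ofReal (2 * C) * κ (tauR σ q r)) atTop (nhds 0) := by
    have h1 := ENNReal.Tendsto.const_mul (a := ENNReal.ofReal C) (hκ₀.comp hgap)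
      (Or.inr ENNReal.ofReal_ne_top)
    have h2 := ENNReal.Tendsto.const_mul (a := ENNReal.ofReal C) (hκ.comp hgap)
      (Or.inr ENNReal.ofReal_ne_top)
    have h3 := ENNReal.Tendsto.const_mul (a := ENNReal.ofReal (2 * C)) (hκ.comp htau)
      (Or.inr ENNReal.ofReal_ne_top)
    have h4 := (ENNReal.Tendsto.const_mul (a := ENNReal.ofReal (2 ^ q)) (h1.add h2)
      (Or.inr ENNReal.ofReal_ne_top)).add h3
    simpa using h4
  refine tendsto_of_tendsto_of_tendsto_of_le_of_le' tendsto_const_nhds hmain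
    (Eventually.of_forall fun _ => zero_le) ?_
  filter_upwards [hlarge] with r hr
  obtain ⟨hr1, hL, hg⟩ := hr
  have hgt := gapR_le_tauR (σ := σ) (q := q) hr1
  have ht : 0 < tauR σ q r := hg.trans_le hgt
  have hC1 := tauR_rpow_le (σ := σ) hq hL
  have hLp : 0 ≤ Real.log r ^ (-(q / 2)) := by positivity
  have hA : ENNReal.ofReal (tauR σ q r ^ q) * tailMoment σ 0 (gapR σ q r)
      ≤ ENNReal.ofReal C * κ₀ (gapR σ q r) := by
    refine (mul_le_mul_right (hκ₀b _ hg) _).trans ?_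
    rw [← mul_assoc, ← ENNReal.ofReal_mul (by positivity), Real.rpow_zero, one_mul,
      exp_gapR hσ hq hL]
    gcongr
  have hB : tailMoment σ q (gapR σ q r) ≤ ENNReal.ofReal C * κ (gapR σ q r) := by
    refine (hκb _ hg).trans ?_
    rw [exp_gapR hσ hq hL]
    have : gapR σ q r ^ q ≤ tauR σ q r ^ q := Real.rpow_le_rpow hg.le hgt hq0
    gcongr
    exact (mul_le_mul_of_nonneg_right this hLp).trans hC1
  have hD : ENNReal.ofReal (r + 1) * tailMoment σ q (tauR σ q r)
      ≤ ENNReal.ofReal (2 * C) * κ (tauR σ q r) := by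
    refine (mul_le_mul_right (hκb _ ht) _).trans ?_
    rw [← mul_assoc, ← ENNReal.ofReal_mul (by positivity), exp_tauR hσ hq (by linarith) hL]
    refine mul_le_mul_left (ENNReal.ofReal_le_ofReal ?_) _
    calc (r + 1) * (tauR σ q r ^ q * (r⁻¹ * Real.log r ^ (-(q / 2))))
        = ((r + 1) * r⁻¹) * (tauR σ q r ^ q * Real.log r ^ (-(q / 2))) := by ring
      _ ≤ 2 * C := by
        have h2 : (r + 1) * r⁻¹ ≤ 2 := by
          rw [← div_eq_mul_inv, div_le_iff₀ (by linarith)]; linarith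
        gcongr
  unfold excess
  gcongr

/-! ### Upper bound: hard thresholding -/

/-- Scalar hard thresholding at level `τ`. -/
def thr (τ y : ℝ) : ℝ := if τ ≤ |y| then y else 0

lemma measurable_thr (τ : ℝ) : Measurable (thr τ) :=
  Measurable.ite (measurableSet_le measurable_const (by fun_prop)) measurable_id measurable_const

/-- Risk of hard thresholding at a zero coordinate. -/
lemma lintegral_thr_zero {q : ℝ} (hq : 1 ≤ q) (σ τ : ℝ) :
    ∫⁻ y, loss q (thr τ y - 0) ∂(gauss 0 σ) = tailMoment σ q τ := by
  rw [tailMoment, ← lintegral_indicator (measurableSet_le measurable_const (by fun_prop))]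
  refine lintegral_congr fun y => ?_
  by_cases h : τ ≤ |y|
  · simp [thr, h]
  · simp [thr, h, loss, (by linarith : q ≠ 0)]

/-- Risk of hard thresholding at a coordinate with `|b| ≥ τ + u`: if the observation `b + z` falls
below the threshold, then `|z| ≥ u` and the loss is `|b|^q ≤ (τ + |z|)^q`. -/
lemma lintegral_thr_signal {q : ℝ} (hq : 1 ≤ q) (σ : ℝ) {τ u b : ℝ} (hτ : 0 ≤ τ)
    (hb : τ + u ≤ |b|) :
    ∫⁻ y, loss q (thr τ y - b) ∂(gauss b σ)
      ≤ ENNReal.ofReal (sigmaqq σ q) + ENNReal.ofReal (2 ^ q) *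
          (ENNReal.ofReal (τ ^ q) * tailMoment σ 0 u + tailMoment σ q u) := by
  have hm := measurable_loss q
  have ht := measurable_thr τ
  have hset : MeasurableSet {z : ℝ | u ≤ |z|} := measurableSet_le measurable_const (by fun_prop)
  rw [← gauss_map_add, lintegral_map (by fun_prop) (by fun_prop)]
  have hpt : ∀ z, loss q (thr τ (b + z) - b) ≤ loss q z +
      {z : ℝ | u ≤ |z|}.indicator
        (fun z => ENNReal.ofReal (2 ^ q) * (ENNReal.ofReal (τ ^ q) * loss 0 z + loss q z)) z := by
    intro z
    by_cases h : τ ≤ |b + z|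
    · simp [thr, h]
    · have hbz : |b| ≤ τ + |z| := by
        have := abs_sub (b + z) z
        rw [add_sub_cancel_right] at this
        linarith
      have hz : u ≤ |z| := by linarith
      rw [Set.indicator_of_mem (show z ∈ {z : ℝ | u ≤ |z|} from hz)]
      refine le_trans ?_ le_add_self
      simp only [thr, h, if_false, loss, zero_sub, abs_neg, Real.rpow_zero, ENNReal.ofReal_one,
        mul_one]
      rw [← ENNReal.ofReal_add (by positivity) (by positivity),
        ← ENNReal.ofReal_mul (by positivity)]
      apply ENNReal.ofReal_le_ofReal
      exact (Real.rpow_le_rpow (abs_nonneg b) hbz (by linarith)).trans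
        (add_rpow_le_two_rpow (by linarith) hτ (abs_nonneg z))
  refine (lintegral_mono hpt).trans (le_of_eq ?_)
  have hm0 := measurable_loss 0
  rw [lintegral_add_left hm, lintegral_loss hq, lintegral_indicator hset,
    lintegral_const_mul _ (by fun_prop), lintegral_add_left (by fun_prop),
    lintegral_const_mul _ hm0]
  rfl

/-- The minimax risk is at most the maximal risk of hard thresholding at level `τ`. -/
theorem minimax_le {p s : ℕ} {q : ℝ} (hq : 1 ≤ q) (σ : ℝ) {a τ u : ℝ} (hτ : 0 ≤ τ)
    (ha : τ + u ≤ a) :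
    minimax p s σ q a ≤ (s : ℝ≥0∞) * (ENNReal.ofReal (sigmaqq σ q) + ENNReal.ofReal (2 ^ q) *
          (ENNReal.ofReal (τ ^ q) * tailMoment σ 0 u + tailMoment σ q u))
        + (p : ℝ≥0∞) * tailMoment σ q τ := by
  have hm := measurable_loss q
  have ht := measurable_thr τ
  set D : ℝ≥0∞ := ENNReal.ofReal (sigmaqq σ q) + ENNReal.ofReal (2 ^ q) *
    (ENNReal.ofReal (τ ^ q) * tailMoment σ 0 u + tailMoment σ q u) with hD
  have he : Measurable (hardThr p τ) :=
    measurable_pi_lambda _ fun j => ht.comp (measurable_pi_apply j)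
  refine (iInf₂_le (hardThr p τ) he).trans (iSup₂_le fun β hβ => ?_)
  rw [seqRisk_eq_sum σ q he]
  have hcoord : ∀ j, ∫⁻ y, loss q (hardThr p τ y j - β j) ∂(seqModel p σ β)
      ≤ (if β j ≠ 0 then D else 0) + tailMoment σ q τ := by
    intro j
    have h1 : ∫⁻ y, loss q (hardThr p τ y j - β j) ∂(seqModel p σ β)
        = ∫⁻ y, loss q (thr τ y - β j) ∂(gauss (β j) σ) :=
      (measurePreserving_eval (fun j => gauss (β j) σ) j).lintegral_comp
        (f := fun y => loss q (thr τ y - β j)) (by fun_prop)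
    rw [h1]
    by_cases h : β j = 0
    · rw [h, lintegral_thr_zero hq]; simp
    · simp only [ne_eq, h, not_false_eq_true, if_true]
      exact (lintegral_thr_signal hq σ hτ (ha.trans (hβ.2 j h))).trans le_self_add
  refine (Finset.sum_le_sum fun j _ => hcoord j).trans ?_
  rw [Finset.sum_add_distrib, ← Finset.sum_filter, Finset.sum_const, Finset.sum_const,
    nsmul_eq_mul, nsmul_eq_mul, Finset.card_univ, Fintype.card_fin]
  gcongr
  exact hβ.1

/-- Exact estimation: the minimax risk is `(1+o(1)) s σ_q^q` when `a ≥ a_q(1)`. -/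
theorem stmt_10 (q σ : ℝ) (hq : 1 ≤ q) (hσ : 0 < σ)
    (p s : ℕ → ℕ) (a : ℕ → ℝ)
    (hs1 : ∀ n, 1 ≤ s n) (hp1 : ∀ n, 1 ≤ p n)
    (hsp : ∀ n, (s n : ℝ) ≤ (p n : ℝ) / 4)
    (hloglog : ∀ n, 8 * q * Real.log (Real.log (p n)) ≤ (s n : ℝ))
    (hlim : Tendsto (fun n => (s n : ℝ) / (p n : ℝ)) atTop (nhds 0))
    (ha : ∀ n, 0 < a n) (haL : ∀ n, aOne (p n) (s n) σ q ≤ a n) :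
    Tendsto (fun n =>
        minimax (p n) (s n) σ q (a n) / ENNReal.ofReal ((s n : ℝ) * sigmaqq σ q))
      atTop (nhds 1) := by
  have hpos := sigmaqq_pos hq hσ
  have hs0 : ∀ n, (0 : ℝ) < s n := fun n => by exact_mod_cast hs1 n
  have hp0 : ∀ n, (0 : ℝ) < p n := fun n => by exact_mod_cast hp1 n
  set S : ℝ≥0∞ := ENNReal.ofReal (sigmaqq σ q) with hS
  have hS0 : S ≠ 0 := by simpa [hS] using hpos
  have hSt : S ≠ ∞ := ENNReal.ofReal_ne_top
  set r : ℕ → ℝ := fun n => (p n : ℝ) / s n - 1 with hr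
  have hden : ∀ n, ENNReal.ofReal ((s n : ℝ) * sigmaqq σ q) = (s n : ℝ≥0∞) * S := fun n => by
    rw [ENNReal.ofReal_mul (hs0 n).le, ENNReal.ofReal_natCast]
  have hsne : ∀ n, (s n : ℝ≥0∞) ≠ 0 := fun n => by
    have := hs1 n
    simp; omega
  have hsS0 : ∀ n, (s n : ℝ≥0∞) * S ≠ 0 := fun n => mul_ne_zero (hsne n) hS0
  have hsSt : ∀ n, (s n : ℝ≥0∞) * S ≠ ∞ := fun n =>
    ENNReal.mul_ne_top (ENNReal.natCast_ne_top _) hSt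
  have hrlim : Tendsto r atTop atTop := by
    have h0 : Tendsto (fun n => (s n : ℝ) / p n) atTop (nhdsWithin 0 (Set.Ioi 0)) :=
      tendsto_nhdsWithin_iff.2 ⟨hlim, Eventually.of_forall fun n => div_pos (hs0 n) (hp0 n)⟩
    have h1 : Tendsto (fun n => (p n : ℝ) / s n) atTop atTop := by
      simpa only [Pi.inv_def, inv_div] using h0.inv_tendsto_nhdsGT_zero
    exact tendsto_atTop_add_const_right _ (-1) h1
  have hup : Tendsto (fun n => 1 + excess σ q (r n) / S) atTop (nhds 1) := by
    have h := (ENNReal.Tendsto.div_const ((tendsto_excess hσ hq).comp hrlim)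
      (Or.inr hS0)).const_add 1
    simpa using h
  refine tendsto_of_tendsto_of_tendsto_of_le_of_le tendsto_const_nhds hup (fun n => ?_) fun n => ?_
  · simp only
    rw [hden, ENNReal.le_div_iff_mul_le (Or.inl (hsS0 n)) (Or.inl (hsSt n)), one_mul]
    refine minimax_ge hq σ (a n) ?_
    have h : (s n : ℝ) ≤ p n := by linarith [hsp n, hp0 n]
    exact_mod_cast h
  · simp only
    rw [hden, ENNReal.div_le_iff (hsS0 n) (hsSt n)]
    have hp : (p n : ℝ≥0∞) = (s n : ℝ≥0∞) * ENNReal.ofReal (r n + 1) := by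
      rw [← ENNReal.ofReal_natCast (s n), ← ENNReal.ofReal_mul (hs0 n).le,
        ← ENNReal.ofReal_natCast (p n)]
      congr 1
      have := hs0 n
      simp only [hr]
      field_simp
      ring
    -- `aOne` is the threshold plus the gap, so `haL` is the separation needed by `minimax_le`.
    have h := minimax_le (p := p n) (s := s n) hq σ (τ := tauR σ q (r n))
      (Real.sqrt_nonneg _) (u := gapR σ q (r n)) (haL n)
    rw [← hS] at h
    refine h.trans (le_of_eq ?_)
    rw [hp, mul_comm _ ((s n : ℝ≥0∞) * S), mul_assoc (s n : ℝ≥0∞) S, mul_add S, mul_one,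
      ENNReal.mul_div_cancel hS0 hSt, excess]
    ring

end
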